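/- Let (X,Σ,m) be a σ-finite measure space, B a separable Banach space, and E a Banach B-bundle over X such that E(x) is a reflexive Banach space for m-a.e. x ∈ X. Then for every p ∈ (1,∞), the section space Γ_p(E) is a reflexive Banach space. -/

import Mathlib

open MeasureTheory
open scoped ENNReal

/-- A *Banach `B`-bundle* over a measurable space `X`: a weakly measurable multivalued map
whose values are closed linear subspaces of `B`. -/
structure BanachBundle (X : Type*) [MeasurableSpace X]
    (B : Type*) [NormedAddCommGroup B] [NormedSpace ℝ B] where
  fiber : X → Submodule ℝ B
  isClosed_fiber : ∀ x, IsClosed (fiber x : Set B)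
  weaklyMeasurable : ∀ U : Set B, IsOpen U →
    MeasurableSet {x | ((fiber x : Set B) ∩ U).Nonempty}

/-- The space `Γ_p(E)` of `L^p`-sections of a Banach bundle `E`, realized as the subspace of
`L^p(m;B)` of elements whose representatives take values in the fibers `m`-a.e. -/
noncomputable def BanachBundle.sections {X B : Type*} [MeasurableSpace X]
    [NormedAddCommGroup B] [NormedSpace ℝ B]
    (m : Measure X) (p : ℝ≥0∞) [Fact (1 ≤ p)] (E : BanachBundle X B) :
    Submodule ℝ (Lp B p m) where
  carrier := {f | ∀ᵐ x ∂m, (f : X → B) x ∈ E.fiber x}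
  zero_mem' := by
    filter_upwards [Lp.coeFn_zero B p m] with x hx
    show (((0 : Lp B p m) : X → B)) x ∈ E.fiber x
    rw [hx]
    exact (E.fiber x).zero_mem
  add_mem' := by
    intro f g hf hg
    filter_upwards [hf, hg, Lp.coeFn_add f g] with x h1 h2 h3
    show (((f + g : Lp B p m) : X → B)) x ∈ E.fiber x
    rw [h3]
    exact (E.fiber x).add_mem h1 h2
  smul_mem' := by
    intro c f hf
    filter_upwards [hf, Lp.coeFn_smul c f] with x h1 h2
    show (((c • f : Lp B p m) : X → B)) x ∈ E.fiber x
    rw [h2]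
    exact (E.fiber x).smul_mem c h1

/-!
Let `q` be the conjugate exponent of `p`. A bounded measurable field `θ` of functionals on `B` and
`u ∈ L^q(m)` define the functional `v ↦ ∫ x, θ x (v x) * u x ∂m`, written `⟪θ, u⟫` here, on
`Γ_p(E)`; since `B` is separable, every functional on `L^p(m; B)`, hence by Hahn–Banach every
functional on `Γ_p(E)`, has this form.

Given `F` in the bidual and a countable family of fields `θ i`, the functional
`u ↦ F ⟪θ i, u⟫` on `L^q(m)` is represented by a density `g i ∈ L^p(m)`. Whenever a combination
`∑ i, a i • θ i`, with `a` chosen among the rational vectors as a measurable function of the point,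
has norm at most `1` on almost every fiber, the same combination of the `g i` has `L^p` norm at most
`‖F‖`. Choosing better and better `a`, monotone convergence bounds all admissible combinations by
one `h ∈ L^p(m)`. By Helly's theorem the values `g i x` then come from an element of the bidual of
`E x` of norm at most `h x`, and reflexivity turns it into a vector `v x ∈ E x`.

If the family contains a norming sequence of constant fields, then `v` is measurable and uniquely
determined; adding one arbitrary field to the norming sequence therefore does not change `v`, so
`v` represents `F` on all functionals.
-/

open Filter Set Topology
open scoped NNReal

section LpDuality

variable {X : Type*} [MeasurableSpace X] {m : Measure X} {p q : ℝ≥0∞}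

theorem tendsto_eLpNorm_sub_of_dominated {ι G : Type*} [NormedAddCommGroup G] {l : Filter ι}
    [l.IsCountablyGenerated] (hp0 : p ≠ 0) (hp : p ≠ ∞) {F : ι → X → G} {f : X → G}
    {bound : X → ℝ} (hF : ∀ i, AEStronglyMeasurable (F i) m) (hf : AEStronglyMeasurable f m)
    (hbound : MemLp bound p m) (hle : ∀ i, ∀ᵐ x ∂m, ‖F i x - f x‖ ≤ bound x)
    (hlim : ∀ᵐ x ∂m, Tendsto (F · x) l (𝓝 (f x))) :
    Tendsto (fun i ↦ eLpNorm (F i - f) p m) l (𝓝 0) := by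
  have hP : 0 < p.toReal := ENNReal.toReal_pos hp0 hp
  have hpow : Tendsto (fun i ↦ ∫⁻ x, ‖F i x - f x‖ₑ ^ p.toReal ∂m) l (𝓝 (∫⁻ _, 0 ∂m)) := by
    refine tendsto_lintegral_filter_of_dominated_convergence' (fun x ↦ ‖bound x‖ₑ ^ p.toReal)
      (.of_forall fun i ↦ ((hF i).sub hf).enorm.pow_const _) (.of_forall fun i ↦ ?_)
      (lintegral_rpow_enorm_lt_top_of_eLpNorm_lt_top hp0 hp hbound.2).ne ?_
    · filter_upwards [hle i] with x hx
      gcongr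
      exact enorm_le_iff_norm_le.2 (hx.trans (le_abs_self _))
    · filter_upwards [hlim] with x hx
      have hsub : Tendsto (fun i ↦ ‖F i x - f x‖ₑ) l (𝓝 0) := by
        simpa using (hx.sub_const (f x)).enorm
      simpa [hP] using hsub.ennrpow_const p.toReal
  have hroot := hpow.ennrpow_const (1 / p.toReal)
  rw [lintegral_zero, ENNReal.zero_rpow_of_pos (by positivity)] at hroot
  exact hroot.congr fun i ↦ (eLpNorm_eq_lintegral_rpow_enorm_toReal hp0 hp).symm

theorem exists_pos_memLp [SigmaFinite m] (hp0 : p ≠ 0) (hp : p ≠ ∞) :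
    ∃ w : X → ℝ, Measurable w ∧ (∀ x, 0 < w x) ∧ MemLp w p m := by
  obtain ⟨g, hg0, hgm, hg⟩ := exists_pos_lintegral_lt_of_sigmaFinite m one_ne_zero
  have hP : 0 < p.toReal := ENNReal.toReal_pos hp0 hp
  have hw : Measurable fun x ↦ (g x : ℝ) ^ (1 / p.toReal) := by fun_prop
  refine ⟨_, hw, fun x ↦ Real.rpow_pos_of_pos (hg0 x) _, hw.aestronglyMeasurable, ?_⟩
  rw [eLpNorm_lt_top_iff_lintegral_rpow_enorm_lt_top hp0 hp]
  refine (lintegral_congr fun x ↦ ?_).trans_lt (hg.trans ENNReal.one_lt_top)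
  rw [Real.enorm_of_nonneg (by positivity), ENNReal.ofReal_rpow_of_nonneg (by positivity) hP.le,
    ← Real.rpow_mul (by positivity)]
  simp [hP.ne']

/-- The vector measure `s ↦ 1_s w` with values in `L^p`, for a weight `w` in `L^p`. -/
noncomputable def indicatorVectorMeasure {G : Type*} [NormedAddCommGroup G] [Fact (1 ≤ p)]
    (hp : p ≠ ∞) {w : X → G} (hw : MemLp w p m) : VectorMeasure X (Lp G p m) where
  measureOf' s := open Classical in if hs : MeasurableSet s then (hw.indicator hs).toLp else 0
  empty' := by
    simp only [MeasurableSet.empty, dite_true, indicator_empty']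
    rfl
  not_measurable' s hs := by simp [hs]
  m_iUnion' A hA hd := by
    have hp0 : p ≠ 0 := (zero_lt_one.trans_le Fact.out).ne'
    simp only [hA, MeasurableSet.iUnion hA, dite_true]
    have hsum (s : Finset ℕ) : ⇑(∑ i ∈ s, (hw.indicator (hA i)).toLp) =ᵐ[m]
        (⋃ i ∈ s, A i).indicator w := by
      have hcoe := ae_all_iff.2 fun i ↦ (hw.indicator (hA i)).coeFn_toLp
      filter_upwards [Lp.coeFn_finsetSum s fun i ↦ (hw.indicator (hA i)).toLp, hcoe] with x hx hcoe
      rw [hx, Finset.indicator_biUnion s A fun i _ j _ hij ↦ hd hij, Finset.sum_apply]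
      exact Finset.sum_congr rfl fun i _ ↦ hcoe i
    refine (Lp.tendsto_Lp_iff_tendsto_eLpNorm _ _ _).2 ?_
    refine (tendsto_eLpNorm_sub_of_dominated hp0 hp
      (F := fun s ↦ (⋃ i ∈ s, A i).indicator w) (bound := fun x ↦ ‖w x‖ + ‖w x‖)
      (fun s ↦ (hw.indicator (s.measurableSet_biUnion fun i _ ↦ hA i)).1)
      (hw.indicator (.iUnion hA)).1 (hw.norm.add hw.norm) (fun s ↦ .of_forall fun x ↦ ?_)
      (.of_forall fun x ↦ ?_)).congr
      fun s ↦ eLpNorm_congr_ae ((hsum s).symm.sub EventuallyEq.rfl)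
    · exact (norm_sub_le _ _).trans
        (add_le_add (norm_indicator_le_norm_self _ _) (norm_indicator_le_norm_self _ _))
    · exact (tendsto_indicator_biUnion_finset A w x).mono_right (pure_le_nhds _)

theorem indicatorVectorMeasure_apply {G : Type*} [NormedAddCommGroup G] [Fact (1 ≤ p)]
    (hp : p ≠ ∞) {w : X → G} (hw : MemLp w p m) {s : Set X} (hs : MeasurableSet s) :
    indicatorVectorMeasure hp hw s = (hw.indicator hs).toLp :=
  dif_pos hs

theorem exists_memLp_integral_mul_eq_rpow [ENNReal.HolderConjugate p q] (hp : p ≠ ∞)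
    (hq : q ≠ ∞) {g : X → ℝ} (hg : MemLp g q m) :
    ∃ f, MemLp f p m ∧ eLpNorm f p m = eLpNorm g q m ^ (q.toReal - 1) ∧
      ∫ x, g x * f x ∂m = (eLpNorm g q m).toReal ^ q.toReal := by
  have hPQ := ENNReal.HolderConjugate.toReal_of_ne_top (p := p) (q := q) hp hq
  have hq0 : q ≠ 0 := ENNReal.HolderConjugate.ne_zero q p
  have hQ1 : 0 < q.toReal - 1 := sub_pos.2 hPQ.symm.lt
  set Q := q.toReal with hQ
  -- the extremal case `f = sign g * |g| ^ (Q - 1)` of Hölder's inequality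
  let f (x : X) : ℝ := g x * |g x| ^ (Q - 2)
  have hf_abs (x : X) : |f x| = |g x| ^ (Q - 1) := by
    rw [abs_mul, abs_of_nonneg (Real.rpow_nonneg (abs_nonneg _) _),
      ← Real.rpow_one_add' (abs_nonneg _) (by linarith)]
    ring_nf
  have hf_mul (x : X) : g x * f x = |g x| ^ Q := by
    rw [← mul_assoc, ← pow_two, ← sq_abs, ← Real.rpow_natCast,
      ← Real.rpow_add' (abs_nonneg _) (by push_cast; linarith)]
    push_cast
    ring_nf
  have hf_norm : eLpNorm f p m = eLpNorm g q m ^ (Q - 1) := by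
    have hpq : p * ENNReal.ofReal (Q - 1) = q := by
      rw [← ENNReal.ofReal_toReal hp, ← ENNReal.ofReal_mul ENNReal.toReal_nonneg,
        ← ENNReal.ofReal_toReal hq]
      congr 1
      linarith [hPQ.mul_eq_add]
    rw [← hpq, ← eLpNorm_norm_rpow g hQ1]
    exact eLpNorm_congr_norm_ae (.of_forall fun x ↦ by
      simp [hf_abs, abs_of_nonneg, Real.rpow_nonneg])
  have hgm := hg.1.aemeasurable
  refine ⟨f, ⟨(hgm.mul (hgm.abs.pow_const _)).aestronglyMeasurable, ?_⟩, hf_norm, ?_⟩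
  · exact hf_norm ▸ ENNReal.rpow_lt_top_of_nonneg hQ1.le hg.2.ne
  · simp only [hf_mul, hg.eLpNorm_eq_integral_rpow_norm hq0 hq, Real.norm_eq_abs, ← hQ]
    have hI : 0 ≤ ∫ x, |g x| ^ Q ∂m := integral_nonneg fun x ↦ by positivity
    rw [ENNReal.toReal_ofReal (by positivity), ← Real.rpow_mul hI,
      inv_mul_cancel₀ hPQ.symm.ne_zero, Real.rpow_one]

theorem eLpNorm_le_of_forall_integral_mul_le [ENNReal.HolderConjugate p q] (hp : p ≠ ∞)
    (hq : q ≠ ∞) {g : X → ℝ} (hg : MemLp g q m) {C : ℝ≥0}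
    (h : ∀ f, MemLp f p m → ∫ x, g x * f x ∂m ≤ C * (eLpNorm f p m).toReal) :
    eLpNorm g q m ≤ C := by
  obtain ⟨f, hf, hf_norm, hf_int⟩ := exists_memLp_integral_mul_eq_rpow hp hq hg
  have hle := h f hf
  rw [hf_int, hf_norm, ← ENNReal.toReal_rpow] at hle
  set N := (eLpNorm g q m).toReal with hN
  rw [← ENNReal.ofReal_coe_nnreal, ENNReal.le_ofReal_iff_toReal_le hg.2.ne C.coe_nonneg]
  rcases (ENNReal.toReal_nonneg : 0 ≤ N).eq_or_lt with hN0 | hN0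
  · exact hN0 ▸ C.coe_nonneg
  · rw [← sub_add_cancel q.toReal 1, Real.rpow_add_one hN0.ne', mul_comm,
      add_sub_cancel_right] at hle
    exact le_of_mul_le_mul_right hle (Real.rpow_pos_of_pos hN0 _)

theorem ae_eq_zero_of_forall_integral_mul_eq_zero [ENNReal.HolderConjugate p q] (hp : p ≠ ∞)
    (hq : q ≠ ∞) {g : X → ℝ} (hg : MemLp g q m)
    (h : ∀ f, MemLp f p m → ∫ x, g x * f x ∂m = 0) : g =ᵐ[m] 0 := by
  rw [← eLpNorm_eq_zero_iff hg.1 (ENNReal.HolderConjugate.ne_zero q p), ← nonpos_iff_eq_zero]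
  simpa using eLpNorm_le_of_forall_integral_mul_le (C := 0) hp hq hg fun f hf ↦ by simp [h f hf]

theorem eLpNorm_le_of_forall_integrable_integral_mul_le [SigmaFinite m]
    [ENNReal.HolderConjugate p q] (hp : p ≠ ∞) (hq : q ≠ ∞) {g : X → ℝ} (hg : Measurable g)
    {C : ℝ≥0} (h : ∀ f, MemLp f p m → Integrable (fun x ↦ g x * f x) m →
      ∫ x, g x * f x ∂m ≤ C * (eLpNorm f p m).toReal) :
    eLpNorm g q m ≤ C := by
  obtain ⟨w, hw, hw0, hwq⟩ := exists_pos_memLp (m := m) (ENNReal.HolderConjugate.ne_zero q p) hq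
  let A (n : ℕ) : Set X := {x | |g x| ≤ n * w x}
  have hA (n : ℕ) : MeasurableSet (A n) := measurableSet_le (by fun_prop) (by fun_prop)
  have htrunc (n : ℕ) : eLpNorm ((A n).indicator g) q m ≤ C := by
    have hmem : MemLp ((A n).indicator g) q m := by
      refine hwq.of_le_mul (c := n) (hg.indicator (hA n)).aestronglyMeasurable
        (.of_forall fun x ↦ ?_)
      rw [norm_indicator_eq_indicator_norm, Real.norm_of_nonneg (hw0 x).le]
      exact indicator_le' (fun x hx ↦ hx) (fun x _ ↦ by have := hw0 x; positivity) x
    refine eLpNorm_le_of_forall_integral_mul_le hp hq hmem fun f hf ↦ ?_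
    have hmul : (fun x ↦ g x * (A n).indicator f x) = fun x ↦ (A n).indicator g x * f x := by
      funext x
      by_cases hx : x ∈ A n <;> simp [hx]
    rw [← hmul]
    refine (h _ (hf.indicator (hA n)) (hmul ▸ hmem.integrable_mul hf)).trans ?_
    gcongr
    · exact hf.2.ne
    · exact eLpNorm_indicator_le f
  refine Lp.eLpNorm_le_of_ae_tendsto (u := atTop) (.of_forall htrunc)
    (fun n ↦ (hg.indicator (hA n)).aestronglyMeasurable) (.of_forall fun x ↦ ?_)
  refine tendsto_const_nhds.congr' ?_
  obtain ⟨N, hN⟩ := exists_nat_ge (|g x| / w x)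
  filter_upwards [eventually_ge_atTop N] with n hn
  have hx : x ∈ A n := (div_le_iff₀ (hw0 x)).1 (hN.trans (by exact_mod_cast hn))
  rw [indicator_of_mem hx]

theorem exists_integrable_forall_indicator_apply_eq [SigmaFinite m] [Fact (1 ≤ p)] (hp : p ≠ ∞)
    {w : X → ℝ} (hw : MemLp w p m) (T : StrongDual ℝ (Lp ℝ p m)) :
    ∃ k : X → ℝ, Measurable k ∧ Integrable k m ∧ ∀ s (hs : MeasurableSet s),
      T (hw.indicator hs).toLp = ∫ x in s, k x ∂m := by
  obtain ⟨ν, hν⟩ : ∃ ν : SignedMeasure X, ∀ s (hs : MeasurableSet s),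
      ν s = T (hw.indicator hs).toLp :=
    ⟨(indicatorVectorMeasure hp hw).mapRange (T : Lp ℝ p m →+ ℝ) T.continuous,
      fun s hs ↦ congrArg T (indicatorVectorMeasure_apply hp hw hs)⟩
  have hac : ν ≪ᵥ m.toENNRealVectorMeasure := by
    refine VectorMeasure.AbsolutelyContinuous.mk fun s hs h0 ↦ ?_
    rw [Measure.toENNRealVectorMeasure_apply_measurable hs] at h0
    have hzero : (hw.indicator hs).toLp = 0 :=
      Lp.eq_zero_iff_ae_eq_zero.2 ((hw.indicator hs).coeFn_toLp.trans (indicator_meas_zero h0))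
    rw [hν s hs, hzero, map_zero]
  refine ⟨ν.rnDeriv m, ν.measurable_rnDeriv m, ν.integrable_rnDeriv m, fun s hs ↦ ?_⟩
  rw [← withDensityᵥ_apply (ν.integrable_rnDeriv m) hs, ν.withDensityᵥ_rnDeriv_eq m hac, hν s hs]

theorem memLp_simpleFunc_mul {w : X → ℝ} (hw : MemLp w p m) (f : SimpleFunc X ℝ) :
    MemLp (fun x ↦ f x * w x) p m := by
  obtain ⟨K, hK⟩ := f.exists_forall_norm_le
  refine hw.of_le_mul (c := K) (f.measurable.aestronglyMeasurable.mul hw.1) (.of_forall fun x ↦ ?_)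
  exact (norm_mul_le _ _).trans (mul_le_mul_of_nonneg_right (hK x) (norm_nonneg _))

theorem apply_toLp_simpleFunc_mul_eq_integral [Fact (1 ≤ p)] {w k : X → ℝ} (hw : MemLp w p m)
    (hk : Integrable k m) {T : StrongDual ℝ (Lp ℝ p m)}
    (hT : ∀ s (hs : MeasurableSet s), T (hw.indicator hs).toLp = ∫ x in s, k x ∂m)
    (f : SimpleFunc X ℝ) (hf : MemLp (fun x ↦ f x * w x) p m) :
    T hf.toLp = ∫ x, f x * k x ∂m := by
  have hfk (f : SimpleFunc X ℝ) : Integrable (fun x ↦ f x * k x) m := by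
    obtain ⟨K, hK⟩ := f.exists_forall_norm_le
    exact hk.bdd_mul f.measurable.aestronglyMeasurable (.of_forall hK)
  induction f using SimpleFunc.induction with
  | @const c s hs =>
    have hsw : hf.toLp = c • (hw.indicator hs).toLp := by
      rw [← MemLp.toLp_const_smul]
      refine MemLp.toLp_congr _ _ (.of_forall fun x ↦ ?_)
      by_cases hx : x ∈ s <;> simp [hx]
    rw [hsw, map_smul, hT s hs, smul_eq_mul, ← integral_const_mul, ← integral_indicator hs]
    refine integral_congr_ae (.of_forall fun x ↦ ?_)
    by_cases hx : x ∈ s <;> simp [hx]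
  | @add f g _ ihf ihg =>
    have hadd : hf.toLp = (memLp_simpleFunc_mul hw f).toLp + (memLp_simpleFunc_mul hw g).toLp := by
      rw [← MemLp.toLp_add]
      exact MemLp.toLp_congr _ _ (.of_forall fun x ↦ add_mul _ _ _)
    rw [hadd, map_add, ihf, ihg, ← integral_add (hfk f) (hfk g)]
    exact integral_congr_ae (.of_forall fun x ↦ (add_mul _ _ _).symm)

theorem apply_toLp_mul_eq_integral [Fact (1 ≤ p)] (hp : p ≠ ∞) {w k : X → ℝ} (hw : MemLp w p m)
    (hk : Integrable k m) {T : StrongDual ℝ (Lp ℝ p m)}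
    (hT : ∀ s (hs : MeasurableSet s), T (hw.indicator hs).toLp = ∫ x in s, k x ∂m)
    {f : X → ℝ} (hfm : Measurable f) (hf : MemLp (fun x ↦ f x * w x) p m)
    (hfk : Integrable (fun x ↦ f x * k x) m) :
    T hf.toLp = ∫ x, f x * k x ∂m := by
  have hp0 : p ≠ 0 := (zero_lt_one.trans_le Fact.out).ne'
  let s (n : ℕ) : SimpleFunc X ℝ := SimpleFunc.approxOn f hfm univ 0 (mem_univ 0) n
  have hs_le (n : ℕ) (x : X) : ‖s n x‖ ≤ 2 * ‖f x‖ :=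
    two_mul ‖f x‖ ▸ SimpleFunc.norm_approxOn_zero_le hfm (mem_univ 0) x n
  have hs_mul_le (n : ℕ) (x : X) (c : ℝ) : ‖s n x * c‖ ≤ 2 * ‖f x * c‖ := by
    rw [norm_mul, norm_mul, ← mul_assoc]
    exact mul_le_mul_of_nonneg_right (hs_le n x) (norm_nonneg _)
  have hs_lim (x : X) : Tendsto (s · x) atTop (𝓝 (f x)) :=
    SimpleFunc.tendsto_approxOn hfm (mem_univ 0) (by simp)
  have hsw (n : ℕ) : MemLp (fun x ↦ s n x * w x) p m :=
    memLp_simpleFunc_mul hw (s n)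
  have hleft : Tendsto (fun n ↦ T (hsw n).toLp) atTop (𝓝 (T hf.toLp)) := by
    refine (T.continuous.tendsto _).comp
      ((Lp.tendsto_Lp_iff_tendsto_eLpNorm'' _ hsw _ hf).2 ?_)
    refine tendsto_eLpNorm_sub_of_dominated hp0 hp (fun n ↦ (hsw n).1) hf.1
      (hf.norm.const_mul 3) (fun n ↦ .of_forall fun x ↦ ?_)
      (.of_forall fun x ↦ (hs_lim x).mul_const _)
    linarith [norm_sub_le (s n x * w x) (f x * w x), hs_mul_le n x (w x)]
  have hright : Tendsto (fun n ↦ ∫ x, s n x * k x ∂m) atTop (𝓝 (∫ x, f x * k x ∂m)) :=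
    tendsto_integral_of_dominated_convergence (fun x ↦ 2 * ‖f x * k x‖)
      (fun n ↦ (s n).measurable.aestronglyMeasurable.mul hk.1) (hfk.norm.const_mul 2)
      (fun n ↦ .of_forall fun x ↦ hs_mul_le n x (k x))
      (.of_forall fun x ↦ (hs_lim x).mul_const _)
  refine tendsto_nhds_unique hleft (hright.congr fun n ↦ ?_)
  exact (apply_toLp_simpleFunc_mul_eq_integral hw hk hT (s n) (hsw n)).symm

theorem exists_measurable_forall_integrable_apply_eq [SigmaFinite m] [Fact (1 ≤ p)] (hp : p ≠ ∞)
    (T : StrongDual ℝ (Lp ℝ p m)) :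
    ∃ g : X → ℝ, Measurable g ∧ ∀ f (hf : MemLp f p m), Integrable (fun x ↦ g x * f x) m →
      T hf.toLp = ∫ x, g x * f x ∂m := by
  have hp0 : p ≠ 0 := (zero_lt_one.trans_le Fact.out).ne'
  obtain ⟨w, hw, hw0, hwp⟩ := exists_pos_memLp (m := m) hp0 hp
  obtain ⟨k, hk, hki, hT⟩ := exists_integrable_forall_indicator_apply_eq hp hwp T
  refine ⟨fun x ↦ k x / w x, hk.div hw, fun f hf hfg ↦ ?_⟩
  obtain ⟨f', hf'm, hff'⟩ := hf.1.aemeasurable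
  have hw_mul : (fun x ↦ f' x / w x * w x) = f' :=
    funext fun x ↦ div_mul_cancel₀ _ (hw0 x).ne'
  have hk_mul : (fun x ↦ f' x / w x * k x) =ᵐ[m] fun x ↦ k x / w x * f x := by
    filter_upwards [hff'] with x hx
    rw [hx]
    ring
  have hf'w : MemLp (fun x ↦ f' x / w x * w x) p m := by
    rw [hw_mul]
    exact hf.ae_eq hff'
  rw [← integral_congr_ae hk_mul,
    ← apply_toLp_mul_eq_integral (f := fun x ↦ f' x / w x) hp hwp hki hT (hf'm.div hw) hf'w
      (hfg.congr hk_mul.symm)]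
  exact congrArg T ((MemLp.toLp_eq_toLp_iff _ _).2 (hff'.trans (.of_eq hw_mul.symm)))

theorem surjective_lpPairing_mul [SigmaFinite m] [Fact (1 ≤ p)] [Fact (1 ≤ q)]
    [ENNReal.HolderConjugate p q] (hp : p ≠ ∞) (hq : q ≠ ∞) :
    Function.Surjective ((ContinuousLinearMap.mul ℝ ℝ).lpPairing m q p) := fun T ↦ by
  obtain ⟨g, hg, hT⟩ := exists_measurable_forall_integrable_apply_eq hp T
  have hgq : MemLp g q m := by
    refine ⟨hg.aestronglyMeasurable, lt_of_le_of_lt ?_ (ENNReal.coe_lt_top (r := ‖T‖₊))⟩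
    refine eLpNorm_le_of_forall_integrable_integral_mul_le hp hq hg fun f hf hfg ↦ ?_
    rw [← hT f hf hfg, ← Lp.norm_toLp f hf]
    exact (le_abs_self _).trans (T.le_opNorm _)
  refine ⟨hgq.toLp, ContinuousLinearMap.ext fun u ↦ ?_⟩
  have hu := hT u (Lp.memLp u) (hgq.integrable_mul (Lp.memLp u))
  rw [Lp.toLp_coeFn] at hu
  rw [ContinuousLinearMap.lpPairing_eq_integral, hu]
  refine integral_congr_ae ?_
  filter_upwards [hgq.coeFn_toLp] with x hx
  rw [hx, ContinuousLinearMap.mul_apply']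

end LpDuality

section RatComb

variable {ι V W : Type*} [AddCommGroup V] [Module ℝ V] [AddCommGroup W] [Module ℝ W]

/-- The rational linear combinations `∑ i, a i • y i` of a family of vectors in a real vector
space, as an additive map in the finitely supported coefficients `a : ι →₀ ℚ`. For countable `ι`
there are only countably many of them. -/
noncomputable def ratComb (y : ι → V) : (ι →₀ ℚ) →+ V :=
  (Finsupp.linearCombination ℝ y).toAddMonoidHom.comp
    (Finsupp.mapRange.addMonoidHom (Rat.castHom ℝ))

theorem ratComb_eq_sum (y : ι → V) (a : ι →₀ ℚ) :
    ratComb y a = ∑ i ∈ a.support, (a i : ℝ) • y i :=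
  Finsupp.sum_mapRange_index (hf := Rat.cast_zero) fun i ↦ zero_smul ℝ (y i)

theorem ratComb_smul (y : ι → V) (t : ℚ) (a : ι →₀ ℚ) :
    ratComb y (t • a) = (t : ℝ) • ratComb y a := by
  have hcast : (t • a).mapRange (Rat.cast : ℚ → ℝ) Rat.cast_zero =
      (t : ℝ) • a.mapRange (Rat.cast : ℚ → ℝ) Rat.cast_zero := by
    ext i
    simp
  exact (congrArg _ hcast).trans (map_smul (Finsupp.linearCombination ℝ y) _ _)

theorem map_ratComb {F : Type*} [FunLike F V W] [LinearMapClass F ℝ V W] (f : F) (y : ι → V)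
    (a : ι →₀ ℚ) : f (ratComb y a) = ratComb (fun i ↦ f (y i)) a := by
  simp [ratComb_eq_sum, map_sum, map_smul]

theorem linearCombination_mem_closure_range_ratComb [TopologicalSpace V] [ContinuousAdd V]
    [ContinuousSMul ℝ V] (y : ι → V) (b : ι →₀ ℝ) :
    Finsupp.linearCombination ℝ y b ∈ closure (range (ratComb y)) := by
  rw [Finsupp.linearCombination_apply]
  refine sum_mem (S := (AddMonoidHom.mrange (ratComb y)).topologicalClosure) fun i _ ↦ ?_
  have hcont : Continuous fun r : ℝ ↦ r • y i := continuous_id.smul continuous_const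
  refine hcont.range_subset_closure_image_dense Rat.denseRange_cast ⟨b i, rfl⟩ |> closure_mono ?_
  rintro _ ⟨_, ⟨t, rfl⟩, rfl⟩
  exact ⟨Finsupp.single i t, by simp [ratComb]⟩

end RatComb

section Helly

variable {ι V : Type*} [NormedAddCommGroup V] [NormedSpace ℝ V] {y : ι → V} {c : ι → ℝ} {h : ℝ}

theorem ratComb_le_mul_norm (H : ∀ a, ‖ratComb y a‖ ≤ 1 → ratComb c a ≤ h) (a : ι →₀ ℚ) :
    ratComb c a ≤ h * ‖ratComb y a‖ := by
  have hh : 0 ≤ h := by simpa using H 0 (by simp)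
  have hscale (t : ℚ) (ht : ‖ratComb y a‖ < t) : ratComb c a ≤ h * t := by
    have ht0 : (0 : ℝ) < t := (norm_nonneg _).trans_lt ht
    have hle := H (t⁻¹ • a) (by
      rw [ratComb_smul, norm_smul, Rat.cast_inv, norm_inv, Real.norm_of_nonneg ht0.le,
        inv_mul_le_iff₀ ht0, mul_one]
      exact ht.le)
    rwa [ratComb_smul, smul_eq_mul, Rat.cast_inv, inv_mul_le_iff₀ ht0, mul_comm] at hle
  have hlim : Tendsto (h * ·) (𝓝[>] ‖ratComb y a‖) (𝓝 (h * ‖ratComb y a‖)) :=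
    (tendsto_id.mono_left nhdsWithin_le_nhds).const_mul h
  refine ge_of_tendsto hlim ?_
  filter_upwards [self_mem_nhdsWithin] with r hr
  obtain ⟨t, ht, htr⟩ := exists_rat_btwn (mem_Ioi.1 hr)
  exact (hscale t ht).trans (by gcongr)

theorem linearCombination_le_mul_norm (H : ∀ a, ratComb c a ≤ h * ‖ratComb y a‖) (b : ι →₀ ℝ) :
    Finsupp.linearCombination ℝ c b ≤ h * ‖Finsupp.linearCombination ℝ y b‖ := by
  let z (i : ι) : V × ℝ := (y i, c i)
  have hclosed : IsClosed {v : V × ℝ | v.2 ≤ h * ‖v.1‖} := isClosed_le (by fun_prop) (by fun_prop)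
  have hrange : range (ratComb z) ⊆ {v | v.2 ≤ h * ‖v.1‖} := by
    rintro _ ⟨a, rfl⟩
    have hfst : (ratComb z a).1 = ratComb y a := map_ratComb (LinearMap.fst ℝ V ℝ) z a
    have hsnd : (ratComb z a).2 = ratComb c a := map_ratComb (LinearMap.snd ℝ V ℝ) z a
    simpa only [mem_ofPred_eq, hfst, hsnd] using H a
  have hb := closure_minimal hrange hclosed (linearCombination_mem_closure_range_ratComb z b)
  simpa [z, Finsupp.linearCombination_apply, Finsupp.sum, Prod.fst_sum, Prod.snd_sum] using hb

theorem exists_strongDual_norm_le_forall_apply_eq (hh : 0 ≤ h)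
    (H : ∀ b, Finsupp.linearCombination ℝ c b ≤ h * ‖Finsupp.linearCombination ℝ y b‖) :
    ∃ f : StrongDual ℝ V, ‖f‖ ≤ h ∧ ∀ i, f (y i) = c i := by
  set Y := Finsupp.linearCombination ℝ y
  set C := Finsupp.linearCombination ℝ c
  have habs (b : ι →₀ ℝ) : |C b| ≤ h * ‖Y b‖ :=
    abs_le'.2 ⟨H b, by simpa using H (-b)⟩
  have hker : LinearMap.ker Y ≤ LinearMap.ker C := fun b hb ↦ by
    simpa [LinearMap.mem_ker.1 hb] using habs b
  obtain ⟨s, hs⟩ := Y.rangeRestrict.exists_rightInverse_of_surjective Y.range_rangeRestrict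
  have hC (b : ι →₀ ℝ) : C (s (Y.rangeRestrict b)) = C b := by
    rw [← sub_eq_zero, ← map_sub]
    refine hker (LinearMap.mem_ker.2 ?_)
    rw [map_sub, sub_eq_zero]
    exact congrArg Subtype.val (LinearMap.congr_fun hs (Y.rangeRestrict b))
  have hbound (v : LinearMap.range Y) : ‖(C ∘ₗ s) v‖ ≤ h * ‖v‖ :=
    (habs (s v)).trans_eq
      (congrArg (fun w : LinearMap.range Y ↦ h * ‖w‖) (LinearMap.congr_fun hs v))
  obtain ⟨f, hf, hfn⟩ := exists_extension_norm_eq _ ((C ∘ₗ s).mkContinuous h hbound)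
  refine ⟨f, hfn.trans_le (LinearMap.mkContinuous_norm_le _ hh _), fun i ↦ ?_⟩
  have hi := hf (Y.rangeRestrict (Finsupp.single i 1))
  rw [LinearMap.mkContinuous_apply, LinearMap.comp_apply, hC] at hi
  simpa [Y, C] using hi

theorem exists_strongDual_norm_le_forall_apply_eq_of_ratComb_le
    (H : ∀ a, ‖ratComb y a‖ ≤ 1 → ratComb c a ≤ h) :
    ∃ f : StrongDual ℝ V, ‖f‖ ≤ h ∧ ∀ i, f (y i) = c i :=
  exists_strongDual_norm_le_forall_apply_eq (by simpa using H 0 (by simp))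
    (linearCombination_le_mul_norm (ratComb_le_mul_norm H))

end Helly

section Domination

variable {X : Type*} [MeasurableSpace X] {m : Measure X} {p q : ℝ≥0∞}

theorem exists_Lp_ae_forall_le_of_monotone (hq0 : q ≠ 0) {f : ℕ → X → ℝ}
    (hf : ∀ n, Measurable (f n)) (hmono : ∀ᵐ x ∂m, Monotone (f · x)) {R : ℝ≥0}
    (hR : ∀ n, eLpNorm (f n) q m ≤ R) :
    ∃ h : Lp ℝ q m, ∀ᵐ x ∂m, ∀ n, f n x ≤ h x := by
  have hlim : ∀ᵐ x ∂m, ∃ l, Tendsto (f · x) atTop (𝓝 l) := by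
    filter_upwards [ae_bdd_liminf_atTop_of_eLpNorm_bdd hq0 hf hR, hmono] with x hx hmono
    refine (tendsto_atTop_of_monotone hmono).resolve_left fun htop ↦ hx.ne ?_
    have hnorm : Tendsto (fun n ↦ ENNReal.ofReal ‖f n x‖) atTop (𝓝 ∞) :=
      ENNReal.tendsto_ofReal_atTop.comp (tendsto_norm_atTop_atTop.comp htop)
    simpa only [ofReal_norm] using hnorm.liminf_eq
  obtain ⟨h, hh, htends⟩ := exists_stronglyMeasurable_limit_of_tendsto_ae
    (fun n ↦ (hf n).aestronglyMeasurable) hlim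
  have hhq : MemLp h q m := ⟨hh.aestronglyMeasurable,
    (Lp.eLpNorm_le_of_ae_tendsto (.of_forall hR) (fun n ↦ (hf n).aestronglyMeasurable)
      htends).trans_lt ENNReal.coe_lt_top⟩
  refine ⟨hhq.toLp, ?_⟩
  filter_upwards [htends, hmono, hhq.coeFn_toLp] with x hx hmono hhx n
  exact hhx ▸ hmono.ge_of_tendsto hx n

theorem exists_simpleFunc_monotone_forall_exists_le {α : Type*} [Countable α] {S : α → Set X}
    (hS : ∀ a, MeasurableSet (S a)) {a₀ : α} (ha₀ : S a₀ = univ) {G : α → X → ℝ}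
    (hG : ∀ a, Measurable (G a)) :
    ∃ j : ℕ → SimpleFunc X α, (∀ n x, x ∈ S (j n x)) ∧ (∀ x, Monotone fun n ↦ G (j n x) x) ∧
      ∀ a, ∀ x ∈ S a, ∃ n, G a x ≤ G (j n x) x := by
  classical
  have : Nonempty α := ⟨a₀⟩
  obtain ⟨e, he⟩ := exists_surjective_nat α
  have hT (n : ℕ) (f : SimpleFunc X α) :
      MeasurableSet (S (e n) ∩ {x | G (f x) x < G (e n) x}) :=
    (hS _).inter (measurableSet_lt (f.measurable_bind G hG) (hG _))
  let j (n : ℕ) : SimpleFunc X α := n.rec (SimpleFunc.const X a₀)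
    fun n f ↦ SimpleFunc.piecewise _ (hT n f) (SimpleFunc.const X (e n)) f
  have hj (n : ℕ) (x : X) :
      j (n + 1) x = if x ∈ S (e n) ∩ {x | G (j n x) x < G (e n) x} then e n else j n x :=
    (SimpleFunc.piecewise_apply (hs := hT n (j n)) _ _ x).trans (by congr)
  refine ⟨j, fun n x ↦ ?_, fun x ↦ monotone_nat_of_le_succ fun n ↦ ?_, fun a x hx ↦ ?_⟩
  · induction n with
    | zero => exact ha₀ ▸ mem_univ x
    | succ n ih =>
      rw [hj]
      split_ifs with h
      exacts [h.1, ih]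
  · rw [hj]
    split_ifs with h
    exacts [h.2.le, le_rfl]
  · obtain ⟨n, rfl⟩ := he a
    refine ⟨n + 1, ?_⟩
    rw [hj]
    split_ifs with h
    exacts [le_rfl, not_lt.1 fun hlt ↦ h ⟨hx, hlt⟩]

theorem sum_indicator_simpleFunc {α M : Type*} [AddCommMonoid M] (j : SimpleFunc X α)
    (f : α → X → M) (x : X) :
    ∑ a ∈ j.range, (j ⁻¹' {a}).indicator (f a) x = f (j x) x := by
  rw [Finset.sum_eq_single (j x)]
  · exact indicator_of_mem (s := j ⁻¹' {j x}) rfl _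
  · exact fun a _ ha ↦ indicator_of_notMem (s := j ⁻¹' {a}) (Ne.symm ha) _
  · exact fun h ↦ absurd (j.mem_range_self x) h

theorem coeFn_ratComb {ι : Type*} (g : ι → Lp ℝ q m) (a : ι →₀ ℚ) :
    ⇑(ratComb g a) =ᵐ[m] fun x ↦ ratComb (fun i ↦ g i x) a := by
  simp only [ratComb_eq_sum]
  have hsmul := (eventually_all_finset a.support).2 fun i _ ↦ Lp.coeFn_smul (a i : ℝ) (g i)
  filter_upwards [Lp.coeFn_finsetSum a.support fun i ↦ (a i : ℝ) • g i, hsmul] with x hx hsmul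
  rw [hx, Finset.sum_apply]
  exact Finset.sum_congr rfl fun i hi ↦ hsmul i hi

variable [Fact (1 ≤ p)] [ENNReal.HolderConjugate p q] {W : Type*}
  [NormedAddCommGroup W] [NormedSpace ℝ W]

theorem eLpNorm_simpleFunc_le_of_forall_norm_sum_le (hp : p ≠ ∞) (hq : q ≠ ∞) {α : Type*}
    {L : α → Lp ℝ p m →L[ℝ] W} {F : StrongDual ℝ W} {g : α → Lp ℝ q m}
    (hg : ∀ a u, F (L a u) = ∫ x, g a x * u x ∂m) (j : SimpleFunc X α)
    (hL : ∀ u : Lp ℝ p m,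
      ‖∑ a ∈ j.range, L a ((Lp.memLp u).indicator (j.measurableSet_fiber a)).toLp‖ ≤ ‖u‖) :
    eLpNorm (fun x ↦ g (j x) x) q m ≤ ‖F‖₊ := by
  have hmem : MemLp (fun x ↦ g (j x) x) q m := by
    simp only [← sum_indicator_simpleFunc j fun a ↦ g a]
    exact memLp_finsetSum _ fun a _ ↦ (Lp.memLp (g a)).indicator (j.measurableSet_fiber a)
  refine eLpNorm_le_of_forall_integral_mul_le hp hq hmem fun f hf ↦ ?_
  set u : Lp ℝ p m := hf.toLp f with hu
  let v (a : α) : Lp ℝ p m := ((Lp.memLp u).indicator (j.measurableSet_fiber a)).toLp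
  have hsum : (fun x ↦ g (j x) x * f x) =ᵐ[m] fun x ↦ ∑ a ∈ j.range, g a x * v a x := by
    have hv (a : α) : v a =ᵐ[m] (j ⁻¹' {a}).indicator u := MemLp.coeFn_toLp _
    filter_upwards [hf.coeFn_toLp, (eventually_all_finset _).2 fun a (_ : a ∈ j.range) ↦ hv a]
      with x hx hvx
    rw [← hx, ← sum_indicator_simpleFunc j (fun a x ↦ g a x * u x) x]
    exact Finset.sum_congr rfl fun a ha ↦ by rw [hvx a ha, indicator_mul_right]
  have hint : ∫ x, g (j x) x * f x ∂m = F (∑ a ∈ j.range, L a (v a)) := by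
    have : ENNReal.HolderConjugate q p := .symm
    have hgv (a : α) : Integrable (fun x ↦ g a x * v a x) m :=
      (Lp.memLp (g a)).integrable_mul (Lp.memLp (v a))
    rw [integral_congr_ae hsum, integral_finsetSum _ fun a _ ↦ hgv a, map_sum]
    simp only [hg]
  rw [hint, ← Lp.norm_toLp f hf, ← hu]
  exact (le_abs_self _).trans (F.le_opNorm_of_le (hL u))

theorem exists_Lp_ae_forall_le_of_forall_norm_sum_le (hp : p ≠ ∞) (hq : q ≠ ∞) {α : Type*}
    [Countable α] {L : α → Lp ℝ p m →L[ℝ] W} {F : StrongDual ℝ W} {g : α → Lp ℝ q m}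
    (hg : ∀ a u, F (L a u) = ∫ x, g a x * u x ∂m) {S : α → Set X}
    (hS : ∀ a, MeasurableSet (S a)) {a₀ : α} (ha₀ : S a₀ = univ)
    (hL : ∀ j : SimpleFunc X α, (∀ x, x ∈ S (j x)) → ∀ u : Lp ℝ p m,
      ‖∑ a ∈ j.range, L a ((Lp.memLp u).indicator (j.measurableSet_fiber a)).toLp‖ ≤ ‖u‖) :
    ∃ h : Lp ℝ q m, ∀ᵐ x ∂m, ∀ a, x ∈ S a → g a x ≤ h x := by
  have hgm (a : α) : Measurable (g a) := (Lp.stronglyMeasurable (g a)).measurable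
  obtain ⟨j, hjS, hjmono, hjle⟩ := exists_simpleFunc_monotone_forall_exists_le hS ha₀ hgm
  obtain ⟨h, hh⟩ := exists_Lp_ae_forall_le_of_monotone (ENNReal.HolderConjugate.ne_zero q p)
    (fun n ↦ (j n).measurable_bind _ hgm) (.of_forall hjmono)
    fun n ↦ eLpNorm_simpleFunc_le_of_forall_norm_sum_le hp hq hg (j n) (hL (j n) (hjS n))
  refine ⟨h, ?_⟩
  filter_upwards [hh] with x hx a ha
  obtain ⟨n, hn⟩ := hjle a x ha
  exact hn.trans (hx n)

theorem exists_densities_ae_ratComb_le [SigmaFinite m] [Fact (1 ≤ q)] (hp : p ≠ ∞) (hq : q ≠ ∞)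
    {ι : Type*} [Countable ι] (L : ι → Lp ℝ p m →L[ℝ] W) (F : StrongDual ℝ W)
    {S : (ι →₀ ℚ) → Set X}
    (hS : ∀ a, MeasurableSet (S a)) (hS0 : S 0 = univ)
    (hL : ∀ j : SimpleFunc X (ι →₀ ℚ), (∀ x, x ∈ S (j x)) → ∀ u : Lp ℝ p m,
      ‖∑ a ∈ j.range, ratComb L a ((Lp.memLp u).indicator (j.measurableSet_fiber a)).toLp‖ ≤
        ‖u‖) :
    ∃ (g : ι → Lp ℝ q m) (h : Lp ℝ q m), (∀ i u, F (L i u) = ∫ x, g i x * u x ∂m) ∧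
      ∀ᵐ x ∂m, ∀ a, x ∈ S a → ratComb (fun i ↦ g i x) a ≤ h x := by
  let Φ := (ContinuousLinearMap.mul ℝ ℝ).lpPairing m q p
  choose g hg using fun i ↦ surjective_lpPairing_mul hp hq (F.comp (L i))
  have hgint (i : ι) (u : Lp ℝ p m) : F (L i u) = ∫ x, g i x * u x ∂m := by
    rw [← ContinuousLinearMap.comp_apply, ← hg, ContinuousLinearMap.lpPairing_eq_integral]
    rfl
  have hrat (a : ι →₀ ℚ) (u : Lp ℝ p m) : F (ratComb L a u) = ∫ x, ratComb g a x * u x ∂m := by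
    have hcomp : F.comp (ratComb L a) = Φ (ratComb g a) := by
      rw [map_ratComb Φ, ← ContinuousLinearMap.compL_apply, map_ratComb]
      exact congrArg (ratComb · a) (funext fun i ↦ (hg i).symm)
    rw [← ContinuousLinearMap.comp_apply, hcomp, ContinuousLinearMap.lpPairing_eq_integral]
    rfl
  obtain ⟨h, hh⟩ := exists_Lp_ae_forall_le_of_forall_norm_sum_le hp hq hrat hS hS0 hL
  refine ⟨g, h, hgint, ?_⟩
  filter_upwards [hh, ae_all_iff.2 (coeFn_ratComb g)] with x hx hcoe a ha
  exact hcoe a ▸ hx a ha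

end Domination

section FunctionalFields

variable {X B : Type*} [MeasurableSpace X] {m : Measure X} {p q : ℝ≥0∞} [NormedAddCommGroup B]
  [NormedSpace ℝ B]

theorem measurable_apply_of_forall_measurable_apply {θ : X → StrongDual ℝ B}
    (hθ : ∀ b, Measurable (θ · b)) {v : X → B} (hv : StronglyMeasurable v) :
    Measurable fun x ↦ θ x (v x) :=
  measurable_of_tendsto_metrizable (fun n ↦ (hv.approx n).measurable_bind (fun b x ↦ θ x b) hθ)
    (tendsto_pi_nhds.2 fun x ↦ ((θ x).continuous.tendsto _).comp (hv.tendsto_approx x))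

theorem measurable_apply_of_denseRange {ι : Type*} {θ : X → StrongDual ℝ B} {b : ι → B}
    (hb : DenseRange b) (hθ : ∀ i, Measurable (θ · (b i))) (c : B) : Measurable (θ · c) := by
  obtain ⟨u, hu, hlim⟩ := mem_closure_iff_seq_limit.1 (hb c)
  choose k hk using hu
  exact measurable_of_tendsto_metrizable
    (fun n ↦ by simpa only [Function.comp_apply, hk] using hθ (k n))
    (tendsto_pi_nhds.2 fun x ↦ ((θ x).continuous.tendsto _).comp hlim)

variable (X B) in
/-- The space of bounded weak-\* measurable fields `x ↦ θ x` of continuous functionals on `B`.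
Measurability and the bound are required everywhere rather than almost everywhere, so that no
measure is involved and fields can be evaluated at every point. -/
def functionalFields : Submodule ℝ (X → StrongDual ℝ B) where
  carrier := {θ | (∀ b, Measurable (θ · b)) ∧ ∃ C, ∀ x, ‖θ x‖ ≤ C}
  zero_mem' := ⟨fun _ ↦ measurable_const, 0, fun _ ↦ norm_zero.le⟩
  add_mem' := fun ⟨hθ, C, hC⟩ ⟨hη, D, hD⟩ ↦
    ⟨fun b ↦ (hθ b).add (hη b), C + D, fun x ↦ norm_add_le_of_le (hC x) (hD x)⟩
  smul_mem' := fun c _ ⟨hθ, C, hC⟩ ↦ ⟨fun b ↦ (hθ b).const_smul c, ‖c‖ * C, fun x ↦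
    (norm_smul_le _ _).trans (mul_le_mul_of_nonneg_left (hC x) (norm_nonneg c))⟩

theorem memLp_field_apply (θ : functionalFields X B) (v : Lp B p m) :
    MemLp (fun x ↦ θ.1 x (v x)) p m := by
  obtain ⟨hθ, C, hC⟩ := θ.2
  exact (Lp.memLp v).of_le_mul (measurable_apply_of_forall_measurable_apply hθ
    (Lp.stronglyMeasurable v)).aestronglyMeasurable
    (.of_forall fun x ↦ (θ.1 x).le_of_opNorm_le (hC x) _)

variable (m p) in
/-- The map `v ↦ θ(v)` from `L^p(m; B)` to `L^p(m)` given by pointwise application of a field of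
functionals `θ`. -/
noncomputable def fieldApplyLp [Fact (1 ≤ p)] (θ : functionalFields X B) :
    Lp B p m →L[ℝ] Lp ℝ p m :=
  LinearMap.mkContinuousOfExistsBound
    { toFun := fun v ↦ (memLp_field_apply θ v).toLp
      map_add' := fun v w ↦ by
        rw [← MemLp.toLp_add]
        refine MemLp.toLp_congr _ _ ?_
        filter_upwards [Lp.coeFn_add v w] with x hx
        rw [hx, Pi.add_apply, map_add, Pi.add_apply]
      map_smul' := fun c v ↦ by
        rw [RingHom.id_apply, ← MemLp.toLp_const_smul]
        refine MemLp.toLp_congr _ _ ?_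
        filter_upwards [Lp.coeFn_smul c v] with x hx
        rw [hx, Pi.smul_apply, map_smul, Pi.smul_apply] } <| by
    obtain ⟨-, C, hC⟩ := θ.2
    refine ⟨C, fun v ↦ Lp.norm_le_mul_norm_of_ae_le_mul ?_⟩
    filter_upwards [(memLp_field_apply θ v).coeFn_toLp] with x hx
    exact (congrArg norm hx).trans_le ((θ.1 x).le_of_opNorm_le (hC x) _)

theorem coeFn_fieldApplyLp [Fact (1 ≤ p)] (θ : functionalFields X B) (v : Lp B p m) :
    fieldApplyLp m p θ v =ᵐ[m] fun x ↦ θ.1 x (v x) :=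
  (memLp_field_apply θ v).coeFn_toLp

theorem fieldApplyLp_add [Fact (1 ≤ p)] (θ η : functionalFields X B) :
    fieldApplyLp m p (θ + η) = fieldApplyLp m p θ + fieldApplyLp m p η := by
  ext v
  filter_upwards [coeFn_fieldApplyLp (θ + η) v, coeFn_fieldApplyLp θ v, coeFn_fieldApplyLp η v,
    Lp.coeFn_add (fieldApplyLp m p θ v) (fieldApplyLp m p η v)] with x h hθ hη hadd
  rw [h, add_apply, hadd, Pi.add_apply, hθ, hη]
  rfl

theorem fieldApplyLp_smul [Fact (1 ≤ p)] (c : ℝ) (θ : functionalFields X B) :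
    fieldApplyLp m p (c • θ) = c • fieldApplyLp m p θ := by
  ext v
  filter_upwards [coeFn_fieldApplyLp (c • θ) v, coeFn_fieldApplyLp θ v,
    Lp.coeFn_smul c (fieldApplyLp m p θ v)] with x h hθ hsmul
  rw [h, smul_apply, hsmul, Pi.smul_apply, hθ]
  rfl

theorem integrable_field_apply_mul [ENNReal.HolderConjugate p q] (θ : functionalFields X B)
    (v : Lp B p m) (u : Lp ℝ q m) : Integrable (fun x ↦ θ.1 x (v x) * u x) m :=
  (memLp_field_apply θ v).integrable_mul (Lp.memLp u)

variable (m p q) in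
/-- The pairing `∫ x, θ x (v x) * u x ∂m` of a field of functionals `θ`, a scalar function
`u ∈ L^q(m)` and `v ∈ L^p(m; B)`, as a functional in `v`. -/
noncomputable def fieldPairing [Fact (1 ≤ p)] [Fact (1 ≤ q)] [ENNReal.HolderConjugate p q] :
    functionalFields X B →ₗ[ℝ] Lp ℝ q m →L[ℝ] StrongDual ℝ (Lp B p m) where
  toFun θ := (((ContinuousLinearMap.mul ℝ ℝ).lpPairing m p q).comp (fieldApplyLp m p θ)).flip
  map_add' θ η := by
    ext u v
    simp [fieldApplyLp_add]
  map_smul' c θ := by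
    ext u v
    simp [fieldApplyLp_smul]

theorem fieldPairing_apply [Fact (1 ≤ p)] [Fact (1 ≤ q)] [ENNReal.HolderConjugate p q]
    (θ : functionalFields X B) (u : Lp ℝ q m) (v : Lp B p m) :
    fieldPairing m p q θ u v = ∫ x, θ.1 x (v x) * u x ∂m := by
  change (ContinuousLinearMap.mul ℝ ℝ).lpPairing m p q (fieldApplyLp m p θ v) u = _
  rw [ContinuousLinearMap.lpPairing_eq_integral]
  refine integral_congr_ae ?_
  filter_upwards [coeFn_fieldApplyLp θ v] with x hx
  exact congrArg (· * u x) hx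

end FunctionalFields

section DualOfLp

variable {X B : Type*} [MeasurableSpace X] {m : Measure X} {p q : ℝ≥0∞} [Fact (1 ≤ p)]
  [NormedAddCommGroup B] [NormedSpace ℝ B]

variable (m p B) in
/-- The map `b ↦ (u ↦ u • b)` from `B` to the operators from `L^p(m)` to `L^p(m; B)`. -/
noncomputable def smulConstLp : B →L[ℝ] Lp ℝ p m →L[ℝ] Lp B p m :=
  (ContinuousLinearMap.lsmul ℝ ℝ).flip.compLpL₂ p m

theorem coeFn_smulConstLp (b : B) (u : Lp ℝ p m) :
    smulConstLp B m p b u =ᵐ[m] fun x ↦ u x • b := by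
  rw [smulConstLp, ContinuousLinearMap.compLpL₂_apply_apply]
  exact ContinuousLinearMap.coeFn_compLp ((ContinuousLinearMap.lsmul ℝ ℝ).flip b) u

theorem smulConstLp_indicatorConstLp (c : B) {s : Set X} (hs : MeasurableSet s) (hμs : m s ≠ ∞) :
    smulConstLp B m p c (indicatorConstLp p hs hμs 1) = indicatorConstLp p hs hμs c := by
  refine Lp.ext ((coeFn_smulConstLp c _).trans ?_)
  filter_upwards [indicatorConstLp_coeFn (p := p) (hs := hs) (hμs := hμs) (c := (1 : ℝ)),
    indicatorConstLp_coeFn (p := p) (hs := hs) (hμs := hμs) (c := c)] with x h₁ hc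
  rw [h₁, hc]
  by_cases hx : x ∈ s <;> simp [hx]

theorem ext_of_denseRange_smulConstLp (hp : p ≠ ∞) {ι W : Type*} [NormedAddCommGroup W]
    [NormedSpace ℝ W] {b : ι → B} (hb : DenseRange b) {φ ψ : Lp B p m →L[ℝ] W}
    (h : ∀ i u, φ (smulConstLp B m p (b i) u) = ψ (smulConstLp B m p (b i) u)) : φ = ψ := by
  have hall (c : B) (u : Lp ℝ p m) : φ (smulConstLp B m p c u) = ψ (smulConstLp B m p c u) :=
    hb.induction_on (p := fun c ↦ φ (smulConstLp B m p c u) = ψ (smulConstLp B m p c u)) c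
      (isClosed_eq (by fun_prop) (by fun_prop)) fun i ↦ h i u
  ext v
  induction v using Lp.induction hp with
  | indicatorConst c hs hμs =>
    rw [Lp.simpleFunc.coe_indicatorConst, ← smulConstLp_indicatorConstLp, hall]
  | add hf hg _ hf' hg' => rw [map_add, map_add, hf', hg']
  | isClosed => exact isClosed_eq φ.continuous ψ.continuous

theorem norm_sum_smulConstLp_indicator_le {α : Type*} (j : SimpleFunc X α) {c : α → B}
    (hc : ∀ x, ‖c (j x)‖ ≤ 1) (u : Lp ℝ p m) :
    ‖∑ a ∈ j.range, smulConstLp B m p (c a)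
      ((Lp.memLp u).indicator (j.measurableSet_fiber a)).toLp‖ ≤ ‖u‖ := by
  let v (a : α) : Lp ℝ p m := ((Lp.memLp u).indicator (j.measurableSet_fiber a)).toLp
  have hv (a : α) : smulConstLp B m p (c a) (v a) =ᵐ[m]
      (j ⁻¹' {a}).indicator fun x ↦ u x • c a := by
    have hva : v a =ᵐ[m] (j ⁻¹' {a}).indicator u := MemLp.coeFn_toLp _
    filter_upwards [coeFn_smulConstLp (c a) (v a), hva] with x hx hvx
    rw [hx, hvx, indicator_smul_apply_left]
  refine Lp.norm_le_norm_of_ae_le ?_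
  filter_upwards [Lp.coeFn_finsetSum j.range fun a ↦ smulConstLp B m p (c a) (v a),
    (eventually_all_finset _).2 fun a (_ : a ∈ j.range) ↦ hv a] with x hsum hvx
  rw [hsum, Finset.sum_apply, Finset.sum_congr rfl hvx, sum_indicator_simpleFunc, norm_smul]
  exact mul_le_of_le_one_right (norm_nonneg _) (hc x)

theorem exists_functionalField_ae_apply_mul_eq {ι : Type*} {b : ι → B} (hb : DenseRange b)
    {g : ι → X → ℝ} (hg : ∀ i, Measurable (g i)) {h : X → ℝ} (hh : Measurable h)
    (H : ∀ᵐ x ∂m, ∃ f : StrongDual ℝ B, ‖f‖ ≤ h x ∧ ∀ i, f (b i) = g i x) :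
    ∃ θ : functionalFields X B, ∀ᵐ x ∂m, ∀ i, θ.1 x (b i) * h x = g i x := by
  obtain ⟨T, hTae, hTm, hT⟩ := H.exists_measurable_mem
  choose! f hfh hfb using hT
  have hh0 (x : X) (hx : x ∈ T) : 0 ≤ h x := (norm_nonneg _).trans (hfh x hx)
  let θ : X → StrongDual ℝ B := T.indicator fun x ↦ (h x)⁻¹ • f x
  have hθ (i : ι) : Measurable (θ · (b i)) := by
    have hθ_eq : (θ · (b i)) = T.indicator fun x ↦ (h x)⁻¹ * g i x := by
      ext x
      by_cases hx : x ∈ T <;> simp [θ, hx, hfb]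
    exact hθ_eq ▸ (hh.inv.mul (hg i)).indicator hTm
  have hθ1 (x : X) : ‖θ x‖ ≤ 1 := by
    by_cases hx : x ∈ T
    · simpa [θ, hx, norm_smul, abs_of_nonneg (hh0 x hx)] using
        inv_mul_le_one_of_le₀ (hfh x hx) (hh0 x hx)
    · simp [θ, hx]
  refine ⟨⟨θ, measurable_apply_of_denseRange hb hθ, 1, hθ1⟩, ?_⟩
  filter_upwards [hTae] with x hx i
  rcases eq_or_ne (h x) 0 with h0 | h0
  · have hf0 : f x = 0 := norm_le_zero_iff.1 ((hfh x hx).trans_eq h0)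
    simp [← hfb x hx, hf0, h0]
  · simp [θ, hx, hfb, inv_mul_eq_div, h0]

theorem exists_eq_fieldPairing [SigmaFinite m] [TopologicalSpace.SeparableSpace B]
    [Fact (1 ≤ q)] [ENNReal.HolderConjugate p q] (hp : p ≠ ∞) (hq : q ≠ ∞)
    (φ : StrongDual ℝ (Lp B p m)) :
    ∃ (θ : functionalFields X B) (h : Lp ℝ q m), φ = fieldPairing m p q θ h := by
  obtain ⟨b, hb⟩ := TopologicalSpace.exists_dense_seq B
  have hcomb (a : ℕ →₀ ℚ) :
      ratComb (fun i ↦ smulConstLp B m p (b i)) a = smulConstLp B m p (ratComb b a) :=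
    (map_ratComb (smulConstLp B m p) b a).symm
  obtain ⟨g, h, hg, hle⟩ := exists_densities_ae_ratComb_le hp hq
    (fun i ↦ smulConstLp B m p (b i)) φ (S := fun a ↦ {_x | ‖ratComb b a‖ ≤ 1})
    (fun a ↦ MeasurableSet.const _) (by simp) fun j hj u ↦ by
      simpa only [hcomb] using norm_sum_smulConstLp_indicator_le j hj u
  obtain ⟨θ, hθ⟩ := exists_functionalField_ae_apply_mul_eq hb
    (fun i ↦ (Lp.stronglyMeasurable (g i)).measurable) (Lp.stronglyMeasurable h).measurable <|
    hle.mono fun x hx ↦ exists_strongDual_norm_le_forall_apply_eq_of_ratComb_le hx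
  refine ⟨θ, h, ext_of_denseRange_smulConstLp hp hb fun i u ↦ ?_⟩
  rw [hg, fieldPairing_apply]
  refine integral_congr_ae ?_
  filter_upwards [hθ, coeFn_smulConstLp (b i) u] with x hx hu
  rw [hu, map_smul, smul_eq_mul, ← hx i]
  ring

end DualOfLp

section Norming

variable {X B ι : Type*} [MeasurableSpace X] {m : Measure X} [NormedAddCommGroup B]
  [NormedSpace ℝ B] {ψ : ι → StrongDual ℝ B}

theorem measurable_of_forall_measurable_dist {Y : Type*} [PseudoMetricSpace Y]
    [SecondCountableTopology Y] [MeasurableSpace Y] [BorelSpace Y] {v : X → Y}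
    (hv : ∀ c, Measurable fun x ↦ dist (v x) c) : Measurable v := by
  have hbasis : TopologicalSpace.IsTopologicalBasis {s : Set Y | ∃ c r, Metric.ball c r = s} :=
    TopologicalSpace.isTopologicalBasis_of_isOpen_of_nhds
      (by rintro _ ⟨c, r, rfl⟩; exact Metric.isOpen_ball) fun c U hc hU ↦ by
        obtain ⟨r, hr, hrU⟩ := Metric.isOpen_iff.1 hU c hc
        exact ⟨_, ⟨c, r, rfl⟩, Metric.mem_ball_self hr, hrU⟩
  rw [BorelSpace.measurable_eq (α := Y), hbasis.borel_eq_generateFrom]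
  refine measurable_generateFrom ?_
  rintro _ ⟨c, r, rfl⟩
  exact hv c measurableSet_Iio

/-- A family of functionals in the dual unit ball is *norming* if the norm of every vector is the
supremum of the values of the functionals on it. -/
structure IsNorming (ψ : ι → StrongDual ℝ B) : Prop where
  norm_le_one : ∀ i, ‖ψ i‖ ≤ 1
  norm_le : ∀ ⦃b c⦄, (∀ i, ψ i b ≤ c) → ‖b‖ ≤ c

variable (B) in
theorem exists_seq_isNorming [TopologicalSpace.SeparableSpace B] :
    ∃ ψ : ℕ → StrongDual ℝ B, IsNorming ψ := by
  obtain ⟨e, he⟩ := TopologicalSpace.exists_dense_seq B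
  choose ψ hψ hψe using fun n ↦ exists_dual_vector'' ℝ (e n)
  refine ⟨ψ, hψ, fun b c hc ↦ le_of_forall_pos_le_add fun ε hε ↦ ?_⟩
  obtain ⟨n, hn⟩ := Metric.denseRange_iff.1 he b (ε / 2) (half_pos hε)
  rw [dist_eq_norm] at hn
  have hψ_sub : ψ n (e n - b) ≤ ‖b - e n‖ := by
    rw [norm_sub_rev]
    exact (le_abs_self _).trans ((ψ n).le_of_opNorm_le_of_le (hψ n) le_rfl |>.trans_eq (one_mul _))
  calc ‖b‖ ≤ ‖e n‖ + ‖b - e n‖ := norm_le_norm_add_norm_sub' _ _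
    _ = ψ n b + ψ n (e n - b) + ‖b - e n‖ := by rw [map_sub, hψe, add_sub_cancel]; rfl
    _ ≤ c + ε := by linarith [hc n]

namespace IsNorming

theorem norm_le_iff (hψ : IsNorming ψ) {b : B} {c : ℝ} : ‖b‖ ≤ c ↔ ∀ i, ψ i b ≤ c := by
  refine ⟨fun h i ↦ ?_, fun h ↦ hψ.norm_le h⟩
  exact (le_abs_self _).trans
    (((ψ i).le_of_opNorm_le (hψ.norm_le_one i) b).trans ((one_mul _).trans_le h))

theorem ext (hψ : IsNorming ψ) {b c : B} (h : ∀ i, ψ i b = ψ i c) : b = c :=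
  sub_eq_zero.1 (norm_le_zero_iff.1 (hψ.norm_le fun i ↦ by rw [map_sub, h, sub_self]))

theorem stronglyMeasurable [Countable ι] [TopologicalSpace.SeparableSpace B] (hψ : IsNorming ψ)
    {v : X → B} (hv : ∀ i, Measurable fun x ↦ ψ i (v x)) : StronglyMeasurable v := by
  borelize B
  have : SecondCountableTopology B := UniformSpace.secondCountable_of_separable B
  have hdist (c : B) : Measurable fun x ↦ dist (v x) c := by
    refine measurable_of_Iic fun r ↦ ?_
    have hpre : (fun x ↦ dist (v x) c) ⁻¹' Iic r = ⋂ i, {x | ψ i (v x) - ψ i c ≤ r} := by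
      ext x
      simp [dist_eq_norm, hψ.norm_le_iff]
    exact hpre ▸ .iInter fun i ↦ measurableSet_le ((hv i).sub_const _) measurable_const
  exact (measurable_of_forall_measurable_dist hdist).stronglyMeasurable

end IsNorming

/-- The constant field with value `f`. -/
def constField (f : StrongDual ℝ B) : functionalFields X B :=
  ⟨fun _ ↦ f, fun _ ↦ measurable_const, ‖f‖, fun _ ↦ le_rfl⟩

theorem IsNorming.Lp_ext_of_fieldPairing [Countable ι] {p q : ℝ≥0∞} [Fact (1 ≤ p)] [Fact (1 ≤ q)]
    [ENNReal.HolderConjugate p q] (hp : p ≠ ∞) (hq : q ≠ ∞) (hψ : IsNorming ψ) {v w : Lp B p m}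
    (h : ∀ i (u : Lp ℝ q m), fieldPairing m p q (constField (ψ i)) u v =
      fieldPairing m p q (constField (ψ i)) u w) : v = w := by
  have : ENNReal.HolderConjugate q p := .symm
  have hae (i : ι) : (fun x ↦ ψ i ((v - w) x)) =ᵐ[m] 0 := by
    refine ae_eq_zero_of_forall_integral_mul_eq_zero hq hp
      (memLp_field_apply (constField (ψ i)) (v - w)) fun u hu ↦ ?_
    rw [← sub_eq_zero_of_eq (h i hu.toLp), ← map_sub, fieldPairing_apply]
    refine integral_congr_ae ?_
    filter_upwards [hu.coeFn_toLp] with x hx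
    exact hx ▸ rfl
  refine sub_eq_zero.1 ((Lp.eq_zero_iff_ae_eq_zero).2 ?_)
  filter_upwards [ae_all_iff.2 hae] with x hx
  exact hψ.ext fun i ↦ (hx i).trans (map_zero (ψ i)).symm

theorem abs_integral_mul_le_norm_mul_norm {p q : ℝ≥0∞} [ENNReal.HolderConjugate p q]
    (w : Lp B p m) (u : Lp ℝ q m) {f : X → ℝ} (hf : ∀ᵐ x ∂m, |f x| ≤ ‖w x‖) :
    |∫ x, f x * u x ∂m| ≤ ‖u‖ * ‖w‖ := by
  have : ENNReal.HolderConjugate q p := .symm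
  have hle : ‖∫ x, f x * u x ∂m‖ₑ ≤ eLpNorm u q m * eLpNorm w p m := calc
    ‖∫ x, f x * u x ∂m‖ₑ ≤ ∫⁻ x, ‖f x * u x‖ₑ ∂m := enorm_integral_le_lintegral_enorm _
    _ ≤ ∫⁻ x, ‖((u : X → ℝ) • (w : X → B)) x‖ₑ ∂m := by
      refine lintegral_mono_ae ?_
      filter_upwards [hf] with x hx
      rw [enorm_le_iff_norm_le, Pi.smul_apply', norm_smul, norm_mul, mul_comm]
      exact mul_le_mul_of_nonneg_left hx (norm_nonneg _)
    _ = eLpNorm ((u : X → ℝ) • (w : X → B)) 1 m := eLpNorm_one_eq_lintegral_enorm.symm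
    _ ≤ _ := eLpNorm_smul_le_mul_eLpNorm (Lp.memLp w).1 (Lp.memLp u).1
  rw [← Real.norm_eq_abs, ← toReal_enorm, Lp.norm_def, Lp.norm_def, ← ENNReal.toReal_mul]
  exact ENNReal.toReal_mono (ENNReal.mul_ne_top (Lp.eLpNorm_ne_top u) (Lp.eLpNorm_ne_top w)) hle

end Norming

namespace BanachBundle

variable {X B : Type*} [MeasurableSpace X] {m : Measure X} {p q : ℝ≥0∞} [NormedAddCommGroup B]
  [NormedSpace ℝ B] (E : BanachBundle X B)

theorem measurableSet_exists_mem_fiber_pos [TopologicalSpace.SeparableSpace B] {f : X → B → ℝ}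
    {K : ℝ≥0} (hf : ∀ x, LipschitzWith K (f x)) (hfm : ∀ b, Measurable (f · b)) :
    MeasurableSet {x | ∃ b ∈ E.fiber x, 0 < f x b} := by
  obtain ⟨e, he⟩ := TopologicalSpace.exists_dense_seq B
  have hunion : {x | ∃ b ∈ E.fiber x, 0 < f x b} =
      ⋃ (n : ℕ) (r : ℚ), {x | ((E.fiber x : Set B) ∩ Metric.ball (e n) r).Nonempty} ∩
        {x | (K : ℝ) * r < f x (e n)} := by
    ext x
    simp only [mem_iUnion, mem_inter_iff, mem_ofPred_eq]
    constructor
    · rintro ⟨b, hbE, hb⟩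
      obtain ⟨r, hr0, hr⟩ := exists_rat_btwn (div_pos hb (by positivity : (0 : ℝ) < 2 * K + 1))
      rw [lt_div_iff₀ (by positivity)] at hr
      obtain ⟨n, hn⟩ := Metric.denseRange_iff.1 he b r hr0
      have hlip : f x b - f x (e n) ≤ K * dist b (e n) :=
        (le_abs_self _).trans ((hf x).dist_le_mul b (e n))
      have hKr : K * dist b (e n) ≤ K * r := mul_le_mul_of_nonneg_left hn.le K.coe_nonneg
      exact ⟨n, r, ⟨b, hbE, hn⟩, by linarith⟩
    · rintro ⟨n, r, ⟨b, hbE, hb⟩, hr⟩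
      have hlip : f x (e n) - f x b ≤ K * dist (e n) b :=
        (le_abs_self _).trans ((hf x).dist_le_mul (e n) b)
      have hKr : K * dist (e n) b ≤ K * r :=
        mul_le_mul_of_nonneg_left (Metric.mem_ball'.1 hb).le K.coe_nonneg
      exact ⟨b, hbE, by linarith⟩
  rw [hunion]
  exact .iUnion fun n ↦ .iUnion fun r ↦ (E.weaklyMeasurable _ Metric.isOpen_ball).inter
    (measurableSet_lt measurable_const (hfm (e n)))

theorem norm_comp_subtypeL_le_one_iff {x : X} {f : StrongDual ℝ B} :
    ‖f.comp (E.fiber x).subtypeL‖ ≤ 1 ↔ ¬∃ b ∈ E.fiber x, 0 < f b - ‖b‖ := by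
  simp only [not_exists, not_and, not_lt, sub_nonpos]
  refine ⟨fun h b hb ↦ ?_, fun h ↦ ContinuousLinearMap.opNorm_le_bound _ zero_le_one fun b ↦ ?_⟩
  · exact (le_abs_self _).trans
      ((ContinuousLinearMap.le_of_opNorm_le _ h (⟨b, hb⟩ : E.fiber x)).trans_eq (one_mul _))
  · have hneg : f (-b) ≤ ‖-(b : B)‖ := h _ (neg_mem b.2)
    rw [map_neg, norm_neg] at hneg
    exact (abs_le.2 ⟨neg_le.1 hneg, h b b.2⟩).trans_eq (one_mul _).symm

theorem measurableSet_norm_comp_subtypeL_le_one [TopologicalSpace.SeparableSpace B]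
    (θ : functionalFields X B) :
    MeasurableSet {x | ‖(θ.1 x).comp (E.fiber x).subtypeL‖ ≤ 1} := by
  obtain ⟨hθ, C, hC⟩ := θ.2
  have hlip (x : X) : LipschitzWith (C.toNNReal + 1) fun b ↦ θ.1 x b - ‖b‖ :=
    ((θ.1 x).lipschitz.weaken (NNReal.le_toNNReal_of_coe_le (hC x))).sub lipschitzWith_one_norm
  simp only [norm_comp_subtypeL_le_one_iff]
  exact (E.measurableSet_exists_mem_fiber_pos hlip fun b ↦ (hθ b).sub_const _).compl

variable {E} in
theorem exists_mem_fiber_forall_apply_eq {x : X}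
    (hx : Function.Surjective (NormedSpace.inclusionInDoubleDual ℝ (E.fiber x))) {ι : Type*}
    {f : ι → StrongDual ℝ B} {c : ι → ℝ} {h : ℝ}
    (H : ∀ a, ‖(ratComb f a).comp (E.fiber x).subtypeL‖ ≤ 1 → ratComb c a ≤ h) :
    ∃ b ∈ E.fiber x, ‖b‖ ≤ h ∧ ∀ i, f i b = c i := by
  let restrict : StrongDual ℝ B →L[ℝ] StrongDual ℝ (E.fiber x) := (E.fiber x).subtypeL.precomp ℝ
  obtain ⟨F, hF, hFc⟩ := exists_strongDual_norm_le_forall_apply_eq_of_ratComb_le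
    (y := fun i ↦ restrict (f i)) fun a ha ↦ H a (by rwa [← map_ratComb restrict] at ha)
  obtain ⟨b, rfl⟩ := hx F
  exact ⟨b, b.2, ((NormedSpace.inclusionInDoubleDualLi ℝ).norm_map b).ge.trans hF, hFc⟩

variable (m p q) in
/-- The pairing `∫ x, θ x (v x) * u x ∂m` of a field of functionals `θ` and a scalar function
`u ∈ L^q(m)`, as a functional of the section `v` of `E`. -/
noncomputable def sectionPairing [Fact (1 ≤ p)] [Fact (1 ≤ q)] [ENNReal.HolderConjugate p q] :
    functionalFields X B →ₗ[ℝ] Lp ℝ q m →L[ℝ] StrongDual ℝ (E.sections m p) :=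
  let restrict : StrongDual ℝ (Lp B p m) →L[ℝ] StrongDual ℝ (E.sections m p) :=
    (E.sections m p).subtypeL.precomp ℝ
  (restrict.postcomp (Lp ℝ q m)).toLinearMap ∘ₗ fieldPairing m p q

theorem exists_section_ae_forall_apply_eq [Fact (1 ≤ p)] {ι : Type*}
    {θ : ι → functionalFields X B}
    (hθ : ∀ v : X → B, (∀ i, Measurable fun x ↦ (θ i).1 x (v x)) → StronglyMeasurable v)
    {g : ι → X → ℝ} (hg : ∀ i, Measurable (g i)) {h : X → ℝ} (hh : MemLp h p m)
    (H : ∀ᵐ x ∂m, ∃ b ∈ E.fiber x, ‖b‖ ≤ h x ∧ ∀ i, (θ i).1 x b = g i x) :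
    ∃ v : E.sections m p, ∀ᵐ x ∂m, ∀ i, (θ i).1 x ((v : Lp B p m) x) = g i x := by
  obtain ⟨T, hTae, hTm, hT⟩ := H.exists_measurable_mem
  choose! b hbE hbh hbg using hT
  have hv : StronglyMeasurable (T.indicator b) := hθ _ fun i ↦ by
    have hθb : (fun x ↦ (θ i).1 x (T.indicator b x)) = T.indicator (g i) := by
      ext x
      by_cases hx : x ∈ T <;> simp [hx, hbg]
    exact hθb ▸ (hg i).indicator hTm
  have hvb : ∀ᵐ x ∂m, T.indicator b x = b x := by
    filter_upwards [hTae] with x hx using indicator_of_mem hx b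
  have hvp : MemLp (T.indicator b) p m := hh.of_le hv.aestronglyMeasurable <| by
    filter_upwards [hvb, hTae] with x hxb hx
    exact hxb ▸ (hbh x hx).trans (le_abs_self _)
  refine ⟨⟨hvp.toLp, ?_⟩, ?_⟩
  · change ∀ᵐ x ∂m, hvp.toLp _ x ∈ E.fiber x
    filter_upwards [hvp.coeFn_toLp, hvb, hTae] with x hxv hxb hx
    exact hxv ▸ hxb ▸ hbE x hx
  · filter_upwards [hvp.coeFn_toLp, hvb, hTae] with x hxv hxb hx i
    rw [hxv, hxb, hbg x hx]

variable [Fact (1 ≤ p)] [Fact (1 ≤ q)] [ENNReal.HolderConjugate p q]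

theorem sectionPairing_apply (θ : functionalFields X B) (u : Lp ℝ q m) (v : E.sections m p) :
    E.sectionPairing m p q θ u v = ∫ x, θ.1 x ((v : Lp B p m) x) * u x ∂m :=
  fieldPairing_apply θ u (v : Lp B p m)

theorem norm_sum_sectionPairing_indicator_le {α : Type*} (j : SimpleFunc X α)
    {θ : α → functionalFields X B}
    (hθ : ∀ x, ‖((θ (j x)).1 x).comp (E.fiber x).subtypeL‖ ≤ 1) (u : Lp ℝ q m) :
    ‖∑ a ∈ j.range, E.sectionPairing m p q (θ a)
      ((Lp.memLp u).indicator (j.measurableSet_fiber a)).toLp‖ ≤ ‖u‖ := by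
  let v (a : α) : Lp ℝ q m := ((Lp.memLp u).indicator (j.measurableSet_fiber a)).toLp
  have hv (a : α) : v a =ᵐ[m] (j ⁻¹' {a}).indicator u := MemLp.coeFn_toLp _
  refine ContinuousLinearMap.opNorm_le_bound _ (norm_nonneg _) fun w ↦ ?_
  have hsum : (∑ a ∈ j.range, E.sectionPairing m p q (θ a) (v a)) w =
      ∫ x, (θ (j x)).1 x ((w : Lp B p m) x) * u x ∂m := by
    rw [_root_.sum_apply]
    simp only [sectionPairing_apply]
    rw [← integral_finsetSum _ fun a _ ↦ integrable_field_apply_mul (θ a) (w : Lp B p m) (v a)]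
    refine integral_congr_ae ?_
    filter_upwards [(eventually_all_finset _).2 fun a (_ : a ∈ j.range) ↦ hv a] with x hvx
    rw [← sum_indicator_simpleFunc j (fun a x ↦ (θ a).1 x ((w : Lp B p m) x) * u x) x]
    exact Finset.sum_congr rfl fun a ha ↦ by rw [hvx a ha, indicator_mul_right]
  rw [hsum]
  refine abs_integral_mul_le_norm_mul_norm (w : Lp B p m) u ?_
  filter_upwards [w.2] with x hx
  exact (ContinuousLinearMap.le_of_opNorm_le _ (hθ x)
    (⟨(w : Lp B p m) x, hx⟩ : E.fiber x)).trans_eq (one_mul _)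

theorem exists_section_forall_apply_sectionPairing_eq [SigmaFinite m]
    [TopologicalSpace.SeparableSpace B]
    (hE : ∀ᵐ x ∂m, Function.Surjective (NormedSpace.inclusionInDoubleDual ℝ (E.fiber x)))
    (hp : p ≠ ∞) (hq : q ≠ ∞) {ι : Type*} [Countable ι] {θ : ι → functionalFields X B}
    (hθ : ∀ v : X → B, (∀ i, Measurable fun x ↦ (θ i).1 x (v x)) → StronglyMeasurable v)
    (F : StrongDual ℝ (StrongDual ℝ (E.sections m p))) :
    ∃ v : E.sections m p, ∀ i u,
      F (E.sectionPairing m p q (θ i) u) = E.sectionPairing m p q (θ i) u v := by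
  have : ENNReal.HolderConjugate q p := .symm
  have hcomb (a : ι →₀ ℚ) : ratComb (fun i ↦ E.sectionPairing m p q (θ i)) a =
    E.sectionPairing m p q (ratComb θ a) := (map_ratComb _ θ a).symm
  have heval (a : ι →₀ ℚ) (x : X) : (ratComb θ a).1 x = ratComb (fun i ↦ (θ i).1 x) a :=
    map_ratComb ((LinearMap.proj x).comp (functionalFields X B).subtype) θ a
  obtain ⟨g, h, hg, hle⟩ := exists_densities_ae_ratComb_le
    (W := StrongDual ℝ (E.sections m p)) hq hp
    (fun i ↦ E.sectionPairing m p q (θ i)) F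
    (S := fun a ↦ {x | ‖((ratComb θ a).1 x).comp (E.fiber x).subtypeL‖ ≤ 1})
    (fun a ↦ E.measurableSet_norm_comp_subtypeL_le_one (ratComb θ a))
    (eq_univ_of_forall fun x ↦ by
      rw [mem_ofPred_eq, map_zero]
      exact (norm_zero (E := StrongDual ℝ (E.fiber x))).trans_le zero_le_one) fun j hj u ↦ by
      simpa only [hcomb] using E.norm_sum_sectionPairing_indicator_le j hj u
  obtain ⟨v, hv⟩ := E.exists_section_ae_forall_apply_eq hθ
    (fun i ↦ (Lp.stronglyMeasurable (g i)).measurable) (Lp.memLp h) <| by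
      filter_upwards [hE, hle] with x hx hlex
      exact exists_mem_fiber_forall_apply_eq hx fun a ha ↦ hlex a (by rwa [← heval] at ha)
  refine ⟨v, fun i u ↦ ?_⟩
  rw [hg, sectionPairing_apply]
  refine integral_congr_ae ?_
  filter_upwards [hv] with x hx
  rw [hx]

theorem exists_section_forall_field_apply_sectionPairing_eq [SigmaFinite m]
    [TopologicalSpace.SeparableSpace B]
    (hE : ∀ᵐ x ∂m, Function.Surjective (NormedSpace.inclusionInDoubleDual ℝ (E.fiber x)))
    (hp : p ≠ ∞) (hq : q ≠ ∞) (F : StrongDual ℝ (StrongDual ℝ (E.sections m p))) :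
    ∃ v : E.sections m p, ∀ θ u,
      F (E.sectionPairing m p q θ u) = E.sectionPairing m p q θ u v := by
  obtain ⟨ψ, hψ⟩ := exists_seq_isNorming B
  obtain ⟨v, hv⟩ := E.exists_section_forall_apply_sectionPairing_eq (q := q) hE hp hq
    (θ := fun n ↦ constField (ψ n)) (fun _ ↦ hψ.stronglyMeasurable) F
  refine ⟨v, fun θ u ↦ ?_⟩
  obtain ⟨w, hw⟩ := E.exists_section_forall_apply_sectionPairing_eq (q := q) hE hp hq
    (θ := fun i : Option ℕ ↦ i.elim θ fun n ↦ constField (ψ n))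
    (fun _ hv ↦ hψ.stronglyMeasurable fun n ↦ hv (some n)) F
  have hvw : v = w := Subtype.ext <| hψ.Lp_ext_of_fieldPairing hp hq fun n u ↦
    (hv n u).symm.trans (hw (some n) u)
  exact hvw ▸ hw none u

theorem exists_eq_sectionPairing [SigmaFinite m] [TopologicalSpace.SeparableSpace B]
    (hp : p ≠ ∞) (hq : q ≠ ∞) (φ : StrongDual ℝ (E.sections m p)) :
    ∃ θ u, φ = E.sectionPairing m p q θ u := by
  obtain ⟨φ', hφ', -⟩ := exists_extension_norm_eq (E.sections m p) φ
  obtain ⟨θ, u, hu⟩ := exists_eq_fieldPairing (q := q) hp hq φ'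
  exact ⟨θ, u, ContinuousLinearMap.ext fun v ↦ (hφ' v).symm.trans (congrArg (· v) hu)⟩

end BanachBundle

theorem sections_reflexive_of_ae_fiber_reflexive_general
    {X B : Type*} [MeasurableSpace X] (m : Measure X) [SigmaFinite m]
    [NormedAddCommGroup B] [NormedSpace ℝ B] [TopologicalSpace.SeparableSpace B]
    (E : BanachBundle X B)
    (hrefl : ∀ᵐ x ∂m,
      Function.Surjective (NormedSpace.inclusionInDoubleDual ℝ ↥(E.fiber x)))
    (p : ℝ≥0∞) [Fact (1 ≤ p)] (hp : 1 < p) (hp' : p ≠ ∞) :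
    Function.Surjective (NormedSpace.inclusionInDoubleDual ℝ ↥(E.sections m p)) := by
  obtain ⟨q, hpq⟩ : ∃ q, ENNReal.HolderConjugate p q := ⟨p.conjExponent, inferInstance⟩
  have hq : q ≠ ∞ := ((ENNReal.HolderConjugate.lt_top_iff_one_lt q p).2 hp).ne
  have : Fact (1 ≤ q) := ⟨ENNReal.HolderConjugate.one_le q p⟩
  intro F
  obtain ⟨v, hv⟩ := E.exists_section_forall_field_apply_sectionPairing_eq hrefl hp' hq F
  refine ⟨v, ContinuousLinearMap.ext fun φ ↦ ?_⟩
  obtain ⟨θ, u, rfl⟩ := E.exists_eq_sectionPairing hp' hq φ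
  exact (hv θ u).symm

/-- If `m`-a.e. fiber of a Banach `B`-bundle `E` (with `B` separable) is reflexive, then the
section space `Γ_p(E)` is reflexive for every `p ∈ (1,∞)` (reflexivity expressed via
surjectivity of the canonical inclusion into the double dual). -/
theorem sections_reflexive_of_ae_fiber_reflexive
    {X B : Type*} [MeasurableSpace X] (m : Measure X) [SigmaFinite m]
    [NormedAddCommGroup B] [NormedSpace ℝ B] [CompleteSpace B]
    [TopologicalSpace.SeparableSpace B]
    (E : BanachBundle X B)
    (hrefl : ∀ᵐ x ∂m,
      Function.Surjective (NormedSpace.inclusionInDoubleDual ℝ ↥(E.fiber x)))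
    (p : ℝ≥0∞) [Fact (1 ≤ p)] (hp : 1 < p) (hp' : p ≠ ∞) :
    Function.Surjective (NormedSpace.inclusionInDoubleDual ℝ ↥(E.sections m p)) :=
  sections_reflexive_of_ae_fiber_reflexive_general m E hrefl p hp hp'
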